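/- Assume the block-diagonal hypothesis (H1'), hypothesis (H2): for each j ∈ {1,…,N} the map L^{(j)}(ρ) = Σ_{i=1}^{2d} A_i^{(j)} ρ A_i^{(j)*} on E_j admits a unique invariant state ρ_∞^{(j)}, and hypothesis (H3): the vectors m^{(j)} = ( Tr(A_1 ρ_∞^{(j)} A_1^*), …, Tr(A_{2d} ρ_∞^{(j)} A_{2d}^*) ), j = 1,…,N, are pairwise distinct. Let (ρ_n, X_n)_{n≥0} be the quantum trajectory process under ℙ_ρ started from a density matrix ρ, and let p_∞^{(j)} be the a.s. limit of the martingale p_n^{(j)} = Tr(P_j ρ_n). Then almost surely the vector (p_∞^{(1)},…,p_∞^{(N)}) has exactly one coordinate equal to 1 and all others equal to 0, and for every j, ℙ_ρ[ p_∞^{(j)} = 1 ] = p_0^{(j)} = 1 − ℙ_ρ[ p_∞^{(j)} = 0 ]. -/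

import Mathlib

open MeasureTheory Filter Matrix Finset
open scoped ComplexOrder

noncomputable section

/-- The direction vectors `e_1, …, e_{2d}` in `ℤ^d`, with `e_{d+j} = -e_j`. -/
def dir (d : ℕ) (i : Fin (2 * d)) : Fin d → ℤ :=
  fun j => if (i : ℕ) < d then (if (j : ℕ) = (i : ℕ) then 1 else 0)
           else (if (j : ℕ) = (i : ℕ) - d then -1 else 0)

/-- The direction vectors viewed in `ℝ^d`. -/
def dirR (d : ℕ) (i : Fin (2 * d)) : Fin d → ℝ := fun j => (dir d i j : ℝ)

instance {k : ℕ} : MeasurableSpace (Matrix (Fin k) (Fin k) ℂ) := MeasurableSpace.pi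

/-- A density matrix: positive semidefinite with trace one. -/
def IsDensity {k : ℕ} (ρ : Matrix (Fin k) (Fin k) ℂ) : Prop := ρ.PosSemidef ∧ ρ.trace = 1

/-- The quantum trajectory process of the open quantum random walk. -/
structure IsQTraj {k d : ℕ} {Ω : Type} {mΩ : MeasurableSpace Ω}
    (A : Fin (2 * d) → Matrix (Fin k) (Fin k) ℂ)
    (μ : Measure Ω) (ℱ : Filtration ℕ mΩ)
    (ρ : ℕ → Ω → Matrix (Fin k) (Fin k) ℂ)
    (X : ℕ → Ω → Fin d → ℤ) : Prop where
  density : ∀ n, ∀ᵐ ω ∂μ, IsDensity (ρ n ω)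
  adapted_ρ : ∀ n, Measurable[ℱ n] (ρ n)
  adapted_X : ∀ n, Measurable[ℱ n] (X n)
  prob : ∀ (n : ℕ) (j : Fin (2 * d)),
    μ[(fun ω => if X (n + 1) ω = X n ω + dir d j then (1 : ℝ) else 0) | ℱ n]
      =ᵐ[μ] fun ω => ((A j * ρ n ω * (A j)ᴴ).trace).re
  update : ∀ (n : ℕ) (j : Fin (2 * d)), ∀ᵐ ω ∂μ,
    X (n + 1) ω = X n ω + dir d j →
      ρ (n + 1) ω = ((A j * ρ n ω * (A j)ᴴ).trace)⁻¹ • (A j * ρ n ω * (A j)ᴴ)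

/-!
Along a trajectory, let `η` be a cluster point of the empirical states `(ρ_0 + ⋯ + ρ_{n-1}) / n`,
and let `χ_i(n)` indicate that the `n`-th step goes in direction `e_i`. The conditional expectation
of `χ_i(n) ρ_{n+1}` given the past is `A_i ρ_n A_i^*`, with no normalization, so by the strong law
of large numbers for bounded martingale differences the means of `χ_i(n) ρ_{n+1}` converge to
`A_i η A_i^*` along the same subsequence. Summing over `i` shows that `η` is invariant, and since
`Tr(P_j ρ_n) → p_∞^{(j)}`, pairing with `P_j` gives
`Tr(P_j A_i η A_i^*) = p_∞^{(j)} Tr(A_i η A_i^*)`. If `p_∞^{(j)} ≠ 0`, the normalization of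
`P_j η P_j` is an invariant state of the `j`-th block, hence equals `ρ_∞^{(j)}`, and therefore
`m^{(j)}_i = Tr(A_i η A_i^*)`, which does not depend on `j`. As the `m^{(j)}` are pairwise distinct
and the `p_∞^{(j)}` sum to one, exactly one of them is nonzero. The probabilities follow because the
mean of `Tr(P_j ρ_n)` is conserved.
-/

section CesaroMean

open Topology

variable {E F : Type*} [AddCommGroup E] [Module ℝ E] [AddCommGroup F] [Module ℝ F]

/-- The Cesàro mean `(x 0 + ⋯ + x (n - 1)) / n`; it is `0` at `n = 0`. -/
def cesaroMean (x : ℕ → E) (n : ℕ) : E := (n : ℝ)⁻¹ • ∑ k ∈ range n, x k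

lemma map_cesaroMean (g : E →ₗ[ℝ] F) (x : ℕ → E) (n : ℕ) :
    g (cesaroMean x n) = cesaroMean (fun k => g (x k)) n := by
  simp only [cesaroMean, map_smul, map_sum]

lemma cesaroMean_sub (x y : ℕ → E) (n : ℕ) :
    cesaroMean (fun k => x k - y k) n = cesaroMean x n - cesaroMean y n := by
  simp only [cesaroMean, sum_sub_distrib, smul_sub]

lemma sum_cesaroMean {ι : Type*} [Fintype ι] (x : ι → ℕ → E) (n : ℕ) :
    ∑ i, cesaroMean (x i) n = cesaroMean (fun k => ∑ i, x i k) n := by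
  simp only [cesaroMean, ← smul_sum]
  rw [sum_comm]

lemma cesaroMean_shift (x : ℕ → E) (n : ℕ) :
    cesaroMean (fun k => x (k + 1)) n = cesaroMean x n + (n : ℝ)⁻¹ • (x n - x 0) := by
  rw [cesaroMean, cesaroMean, ← smul_add, ← sum_range_sub, ← sum_add_distrib]
  simp only [add_sub_cancel]

lemma cesaroMean_mem_of_convex {s : Set E} (hs : Convex ℝ s) {x : ℕ → E} (hx : ∀ k, x k ∈ s) {n : ℕ}
    (hn : n ≠ 0) : cesaroMean x n ∈ s := by
  rw [cesaroMean, smul_sum]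
  refine hs.sum_mem (fun _ _ => by positivity) ?_ fun k _ => hx k
  simp [hn]

lemma tendsto_cesaroMean {x : ℕ → ℝ} {l : ℝ} (hx : Tendsto x atTop (𝓝 l)) :
    Tendsto (cesaroMean x) atTop (𝓝 l) :=
  hx.cesaro_smul

lemma map_eq_of_tendsto_cesaroMean [TopologicalSpace E] {g : E →ₗ[ℝ] ℝ} (hcont : Continuous g)
    {x : ℕ → E} {φ : ℕ → ℕ} (hφ : Tendsto φ atTop atTop) {y : E}
    (hy : Tendsto (fun n => cesaroMean x (φ n)) atTop (𝓝 y)) {c : ℝ}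
    (hc : Tendsto (fun n => g (x n)) atTop (𝓝 c)) : g y = c := by
  refine tendsto_nhds_unique ((hcont.tendsto y).comp hy) ?_
  simpa only [Function.comp_def, map_cesaroMean] using (tendsto_cesaroMean hc).comp hφ

lemma tendsto_natSqrt_atTop : Tendsto Nat.sqrt atTop atTop :=
  tendsto_atTop.2 fun b => (eventually_ge_atTop (b * b)).mono fun _ => Nat.le_sqrt.2

lemma abs_sum_range_sub_sum_range_le {x : ℕ → ℝ} {C : ℝ} (hx : ∀ k, |x k| ≤ C) {m n : ℕ}
    (hmn : m ≤ n) : |∑ k ∈ range n, x k - ∑ k ∈ range m, x k| ≤ (n - m : ℝ) * C := by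
  rw [← sum_Ico_eq_sub _ hmn]
  calc |∑ k ∈ Ico m n, x k| ≤ ∑ k ∈ Ico m n, |x k| := abs_sum_le_sum_abs _ _
    _ ≤ #(Ico m n) • C := sum_le_card_nsmul _ _ _ fun k _ => hx k
    _ = (n - m : ℝ) * C := by rw [Nat.card_Ico, nsmul_eq_mul, Nat.cast_sub hmn]

lemma abs_cesaroMean_le_of_sqrt {x : ℕ → ℝ} {C : ℝ} (hx : ∀ k, |x k| ≤ C) {n : ℕ} (hn : n ≠ 0) :
    |cesaroMean x n| ≤ |cesaroMean x (n.sqrt ^ 2)| + 2 * C * (n.sqrt : ℝ)⁻¹ := by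
  have hC : 0 ≤ C := (abs_nonneg _).trans (hx 0)
  have : (0 : ℝ) < n.sqrt := by exact_mod_cast Nat.sqrt_pos.2 (Nat.pos_of_ne_zero hn)
  have hqn : n.sqrt ^ 2 ≤ n := Nat.sqrt_le' n
  have hqn' : (n.sqrt : ℝ) ^ 2 ≤ n := by exact_mod_cast hqn
  have hgap : (n : ℝ) - (n.sqrt ^ 2 : ℕ) ≤ 2 * n.sqrt := by
    have := Nat.sqrt_le_add n
    rw [sub_le_iff_le_add']
    exact_mod_cast (by nlinarith : n ≤ n.sqrt ^ 2 + 2 * n.sqrt)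
  have hsum : |∑ k ∈ range n, x k| ≤ |∑ k ∈ range (n.sqrt ^ 2), x k| + 2 * C * n.sqrt := by
    have htail := (abs_sum_range_sub_sum_range_le hx hqn).trans
      (mul_le_mul_of_nonneg_right hgap hC)
    have := abs_sub_abs_le_abs_sub (∑ k ∈ range n, x k) (∑ k ∈ range (n.sqrt ^ 2), x k)
    linarith
  have hinv : (n : ℝ)⁻¹ ≤ ((n.sqrt : ℝ) ^ 2)⁻¹ := by gcongr
  rw [cesaroMean, cesaroMean, smul_eq_mul, smul_eq_mul, abs_mul, abs_mul, Nat.cast_pow,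
    abs_of_nonneg (by positivity : (0 : ℝ) ≤ (n : ℝ)⁻¹),
    abs_of_nonneg (by positivity : (0 : ℝ) ≤ ((n.sqrt : ℝ) ^ 2)⁻¹)]
  calc (n : ℝ)⁻¹ * |∑ k ∈ range n, x k|
      ≤ ((n.sqrt : ℝ) ^ 2)⁻¹ * (|∑ k ∈ range (n.sqrt ^ 2), x k| + 2 * C * n.sqrt) := by gcongr
    _ = _ := by field_simp

lemma tendsto_cesaroMean_zero_of_sq {x : ℕ → ℝ} {C : ℝ} (hx : ∀ k, |x k| ≤ C)
    (hsq : Tendsto (fun n => cesaroMean x (n ^ 2)) atTop (𝓝 0)) :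
    Tendsto (cesaroMean x) atTop (𝓝 0) := by
  have hinv : Tendsto (fun n : ℕ => 2 * C * (n : ℝ)⁻¹) atTop (𝓝 0) := by
    simpa using tendsto_inv_atTop_nhds_zero_nat.const_mul (2 * C)
  have hbound := (hsq.abs.add hinv).comp tendsto_natSqrt_atTop
  rw [abs_zero, add_zero] at hbound
  exact squeeze_zero_norm' ((eventually_ne_atTop 0).mono fun n => abs_cesaroMean_le_of_sqrt hx)
    hbound

end CesaroMean

section StrongLaw

open Topology

variable {Ω : Type*} {mΩ : MeasurableSpace Ω} {μ : Measure Ω}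

lemma ae_tendsto_zero_of_summable_integral {f : ℕ → Ω → ℝ} (hf : ∀ n, Integrable (f n) μ)
    (hnn : ∀ n ω, 0 ≤ f n ω) (hsum : Summable fun n => ∫ ω, f n ω ∂μ) :
    ∀ᵐ ω ∂μ, Tendsto (fun n => f n ω) atTop (𝓝 0) := by
  have hmeas : ∀ n, AEMeasurable (fun ω => ENNReal.ofReal (f n ω)) μ :=
    fun n => (hf n).aemeasurable.ennreal_ofReal
  have hfin : ∫⁻ ω, ∑' n, ENNReal.ofReal (f n ω) ∂μ ≠ ⊤ := by
    rw [lintegral_tsum hmeas]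
    simp_rw [← ofReal_integral_eq_lintegral_ofReal (hf _) (Eventually.of_forall (hnn _))]
    exact hsum.tsum_ofReal_ne_top
  filter_upwards [ae_lt_top' (AEMeasurable.tsum hmeas) hfin] with ω hω
  have := (ENNReal.tendsto_toReal ENNReal.zero_ne_top).comp
    (ENNReal.tendsto_atTop_zero_of_tsum_ne_top hω.ne)
  simpa only [Function.comp_def, ENNReal.toReal_ofReal (hnn _ _), ENNReal.toReal_zero] using this

lemma integral_mul_eq_zero_of_condExp_eq_zero {m : MeasurableSpace Ω} (hm : m ≤ mΩ)
    [SigmaFinite (μ.trim hm)] {f g : Ω → ℝ} (hf : StronglyMeasurable[m] f)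
    (hfg : Integrable (f * g) μ) (hg : Integrable g μ) (hzero : μ[g | m] =ᵐ[μ] 0) :
    ∫ ω, f ω * g ω ∂μ = 0 := by
  calc ∫ ω, f ω * g ω ∂μ = ∫ ω, μ[f * g | m] ω ∂μ := (integral_condExp hm).symm
    _ = ∫ _, 0 ∂μ := by
      refine integral_congr_ae ?_
      filter_upwards [condExp_mul_of_stronglyMeasurable_left hf hfg hg, hzero] with ω hpull hω
      rw [hpull, Pi.mul_apply, hω, Pi.zero_apply, mul_zero]
    _ = 0 := integral_zero _ _

lemma integral_add_sq_of_condExp_eq_zero {m : MeasurableSpace Ω} (hm : m ≤ mΩ)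
    [SigmaFinite (μ.trim hm)] {f g : Ω → ℝ} (hfm : StronglyMeasurable[m] f) (hf : MemLp f 2 μ)
    (hg : MemLp g 2 μ) (hg_int : Integrable g μ) (hzero : μ[g | m] =ᵐ[μ] 0) :
    ∫ ω, (f ω + g ω) ^ 2 ∂μ = ∫ ω, f ω ^ 2 ∂μ + ∫ ω, g ω ^ 2 ∂μ := by
  have hfg : Integrable (fun ω => f ω * g ω) μ := hf.integrable_mul hg
  have hf2 : Integrable (fun ω => f ω ^ 2) μ := hf.integrable_sq
  have hg2 : Integrable (fun ω => g ω ^ 2) μ := hg.integrable_sq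
  have hsq : Integrable (fun ω => f ω ^ 2 + g ω ^ 2) μ := hf2.add hg2
  have hcross := integral_mul_eq_zero_of_condExp_eq_zero hm hfm hfg hg_int hzero
  calc ∫ ω, (f ω + g ω) ^ 2 ∂μ = ∫ ω, f ω ^ 2 + g ω ^ 2 + 2 * (f ω * g ω) ∂μ := by
        congr 1 with ω
        ring
    _ = ∫ ω, f ω ^ 2 ∂μ + ∫ ω, g ω ^ 2 ∂μ + 2 * ∫ ω, f ω * g ω ∂μ := by
        rw [integral_add hsq (hfg.const_mul 2), integral_add hf2 hg2,
          integral_const_mul]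
    _ = ∫ ω, f ω ^ 2 ∂μ + ∫ ω, g ω ^ 2 ∂μ := by rw [hcross, mul_zero, add_zero]

variable [IsFiniteMeasure μ] {ℱ : Filtration ℕ mΩ} {C : ℝ} {f : ℕ → Ω → ℝ}

lemma integral_sq_le_of_ae_abs_le {g : Ω → ℝ} (hg : MemLp g 2 μ) (hbdd : ∀ᵐ ω ∂μ, |g ω| ≤ C) :
    ∫ ω, g ω ^ 2 ∂μ ≤ C ^ 2 * μ.real Set.univ := by
  calc ∫ ω, g ω ^ 2 ∂μ ≤ ∫ _, C ^ 2 ∂μ := by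
        refine integral_mono_ae hg.integrable_sq (integrable_const _) ?_
        filter_upwards [hbdd] with ω hω
        exact sq_le_sq' (neg_le_of_abs_le hω) (le_of_abs_le hω)
    _ = C ^ 2 * μ.real Set.univ := by rw [integral_const, smul_eq_mul, mul_comm]

lemma integral_sq_sum_range_le (hmeas : ∀ k, StronglyMeasurable[ℱ (k + 1)] (f k))
    (hbdd : ∀ k, ∀ᵐ ω ∂μ, |f k ω| ≤ C) (hzero : ∀ k, μ[f k | ℱ k] =ᵐ[μ] 0) (n : ℕ) :
    ∫ ω, (∑ k ∈ range n, f k ω) ^ 2 ∂μ ≤ n * (C ^ 2 * μ.real Set.univ) := by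
  have hL2 : ∀ k, MemLp (f k) 2 μ := fun k =>
    .of_bound ((hmeas k).mono (ℱ.le _)).aestronglyMeasurable _ (hbdd k)
  induction n with
  | zero => simp
  | succ n ih =>
    have hsum_meas : StronglyMeasurable[ℱ n] fun ω => ∑ k ∈ range n, f k ω :=
      stronglyMeasurable_fun_sum _ fun k hk => (hmeas k).mono (ℱ.mono (mem_range.1 hk))
    have hpythagoras := integral_add_sq_of_condExp_eq_zero (ℱ.le n) hsum_meas
      (memLp_finsetSum _ fun k _ => hL2 k) (hL2 n) ((hL2 n).integrable one_le_two) (hzero n)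
    have hlast := integral_sq_le_of_ae_abs_le (hL2 n) (hbdd n)
    simp only [sum_range_succ]
    push_cast
    linarith

lemma integral_sq_cesaroMean_le (hmeas : ∀ k, StronglyMeasurable[ℱ (k + 1)] (f k))
    (hbdd : ∀ k, ∀ᵐ ω ∂μ, |f k ω| ≤ C) (hzero : ∀ k, μ[f k | ℱ k] =ᵐ[μ] 0) (n : ℕ) :
    ∫ ω, cesaroMean (fun k => f k ω) n ^ 2 ∂μ ≤ C ^ 2 * μ.real Set.univ * (n : ℝ)⁻¹ := by
  calc ∫ ω, cesaroMean (fun k => f k ω) n ^ 2 ∂μ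
      = (n : ℝ)⁻¹ ^ 2 * ∫ ω, (∑ k ∈ range n, f k ω) ^ 2 ∂μ := by
        simp only [cesaroMean, smul_eq_mul, mul_pow, integral_const_mul]
    _ ≤ (n : ℝ)⁻¹ ^ 2 * (n * (C ^ 2 * μ.real Set.univ)) := by
        gcongr
        exact integral_sq_sum_range_le hmeas hbdd hzero n
    _ = C ^ 2 * μ.real Set.univ * (n : ℝ)⁻¹ := by
        rcases eq_or_ne n 0 with rfl | hn
        · simp
        · field_simp

lemma ae_tendsto_cesaroMean_sq (hmeas : ∀ k, StronglyMeasurable[ℱ (k + 1)] (f k))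
    (hbdd : ∀ k, ∀ᵐ ω ∂μ, |f k ω| ≤ C) (hzero : ∀ k, μ[f k | ℱ k] =ᵐ[μ] 0) :
    ∀ᵐ ω ∂μ, Tendsto (fun n => cesaroMean (fun k => f k ω) (n ^ 2)) atTop (𝓝 0) := by
  have hf_L2 : ∀ k, MemLp (f k) 2 μ := fun k =>
    .of_bound ((hmeas k).mono (ℱ.le _)).aestronglyMeasurable C (hbdd k)
  have hL2 : ∀ n, MemLp (fun ω => cesaroMean (fun k => f k ω) n) 2 μ := fun n =>
    (memLp_finsetSum (range n) fun k _ => hf_L2 k).const_mul (n : ℝ)⁻¹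
  have hsum : Summable fun n : ℕ => ∫ ω, cesaroMean (fun k => f k ω) (n ^ 2) ^ 2 ∂μ := by
    refine .of_nonneg_of_le (fun n => integral_nonneg fun ω => sq_nonneg _)
      (fun n => integral_sq_cesaroMean_le hmeas hbdd hzero (n ^ 2)) ?_
    push_cast
    exact (Real.summable_nat_pow_inv.2 one_lt_two).mul_left _
  filter_upwards [ae_tendsto_zero_of_summable_integral (fun n => (hL2 (n ^ 2)).integrable_sq)
    (fun n ω => sq_nonneg _) hsum] with ω hω
  rw [tendsto_zero_iff_abs_tendsto_zero]
  simpa only [Function.comp_def, Real.sqrt_sq_eq_abs, Real.sqrt_zero] using hω.sqrt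

theorem ae_tendsto_cesaroMean_sub_condExp (hmeas : ∀ k, StronglyMeasurable[ℱ (k + 1)] (f k))
    (hbdd : ∀ k, ∀ᵐ ω ∂μ, |f k ω| ≤ C) :
    ∀ᵐ ω ∂μ, Tendsto (cesaroMean fun k => f k ω - μ[f k | ℱ k] ω) atTop (𝓝 0) := by
  have hint : ∀ k, Integrable (f k) μ := fun k =>
    .of_bound ((hmeas k).mono (ℱ.le _)).aestronglyMeasurable _ (hbdd k)
  have hmeas' : ∀ k, StronglyMeasurable[ℱ (k + 1)] (f k - μ[f k | ℱ k]) := fun k =>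
    (hmeas k).sub (stronglyMeasurable_condExp.mono (ℱ.mono k.le_succ))
  have hbdd' : ∀ k, ∀ᵐ ω ∂μ, |(f k - μ[f k | ℱ k]) ω| ≤ C + C := fun k => by
    filter_upwards [hbdd k, ae_bdd_abs_condExp_of_ae_bdd_abs (m := ℱ k) (hbdd k)] with ω hf hcond
    exact (abs_sub _ _).trans (add_le_add hf hcond)
  have hzero : ∀ k, μ[f k - μ[f k | ℱ k] | ℱ k] =ᵐ[μ] 0 := fun k => by
    filter_upwards [condExp_sub (hint k) integrable_condExp (ℱ k)] with ω hω
    rw [hω, condExp_of_stronglyMeasurable (ℱ.le k) stronglyMeasurable_condExp integrable_condExp,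
      sub_self]
  filter_upwards [ae_tendsto_cesaroMean_sq hmeas' hbdd' hzero, ae_all_iff.2 hbdd'] with ω hsq hω
  exact tendsto_cesaroMean_zero_of_sq hω hsq

end StrongLaw

section DensityMatrices

variable {k : ℕ}

lemma trace_eq_ofReal_re {n : Type*} [Fintype n] {ρ : Matrix n n ℂ} (hρ : ρ.PosSemidef) :
    ρ.trace = (ρ.trace.re : ℂ) :=
  Complex.eq_re_of_ofReal_le (r := 0) (by simpa using hρ.trace_nonneg)

lemma re_trace_conjTranspose_mul_self {m n : Type*} [Fintype m] [Fintype n] (B : Matrix m n ℂ) :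
    ((Bᴴ * B).trace).re = ∑ i, ∑ j, ‖B i j‖ ^ 2 := by
  rw [sum_comm]
  simp [trace, mul_apply, Complex.conj_mul', ← Complex.ofReal_pow]

open scoped MatrixOrder in
lemma exists_eq_conjTranspose_mul_self {n : Type*} [Fintype n] {ρ : Matrix n n ℂ}
    (hρ : ρ.PosSemidef) : ∃ B : Matrix n n ℂ, ρ = Bᴴ * B := by
  classical exact CStarAlgebra.nonneg_iff_eq_star_mul_self.1 hρ.nonneg

open scoped Matrix.Norms.Frobenius in
lemma isCompact_setOf_isDensity : IsCompact {ρ : Matrix (Fin k) (Fin k) ℂ | IsDensity ρ} := by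
  have hnorm (B : Matrix (Fin k) (Fin k) ℂ) : ‖B‖ = √((Bᴴ * B).trace).re := by
    rw [re_trace_conjTranspose_mul_self, frobenius_norm_def, Real.sqrt_eq_rpow]
    norm_cast
  have himage : {ρ : Matrix (Fin k) (Fin k) ℂ | IsDensity ρ}
      = (fun B => Bᴴ * B) '' Metric.sphere 0 1 := by
    ext ρ
    simp only [Set.mem_ofPred_eq, Set.mem_image, mem_sphere_zero_iff_norm, hnorm, Real.sqrt_eq_one]
    constructor
    · rintro ⟨hρ, htr⟩
      obtain ⟨B, rfl⟩ := exists_eq_conjTranspose_mul_self hρ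
      exact ⟨B, by rw [htr, Complex.one_re], rfl⟩
    · rintro ⟨B, hB, rfl⟩
      have hpos := posSemidef_conjTranspose_mul_self B
      exact ⟨hpos, by rw [trace_eq_ofReal_re hpos, hB, Complex.ofReal_one]⟩
  rw [himage]
  exact (isCompact_sphere _ _).image (by fun_prop)

lemma convex_setOf_isDensity : Convex ℝ {ρ : Matrix (Fin k) (Fin k) ℂ | IsDensity ρ} := by
  rintro ρ ⟨hρ, hρtr⟩ σ ⟨hσ, hσtr⟩ a b ha hb hab
  refine ⟨(hρ.smul ha).add (hσ.smul hb), ?_⟩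
  rw [trace_add, trace_smul, trace_smul, hρtr, hσtr, ← add_smul, hab, one_smul]

lemma exists_abs_le_of_isDensity (g : Matrix (Fin k) (Fin k) ℂ →ₗ[ℝ] ℝ) :
    ∃ C, ∀ ρ, IsDensity ρ → |g ρ| ≤ C :=
  isCompact_setOf_isDensity.exists_bound_of_continuousOn
    g.continuous_of_finiteDimensional.continuousOn

/-- The functional `ρ ↦ Re Tr(Q ρ)`, the expectation of the observable `Q` in the state `ρ`. -/
def reTraceMul {n : Type*} [Fintype n] (Q : Matrix n n ℂ) : Matrix n n ℂ →ₗ[ℝ] ℝ where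
  toFun ρ := ((Q * ρ).trace).re
  map_add' ρ σ := by rw [mul_add, trace_add, Complex.add_re]
  map_smul' r ρ := by rw [mul_smul_comm, trace_smul, Complex.smul_re, RingHom.id_apply]

lemma reTraceMul_one {n : Type*} [Fintype n] [DecidableEq n] (ρ : Matrix n n ℂ) :
    reTraceMul 1 ρ = ρ.trace.re :=
  congrArg (fun σ : Matrix n n ℂ => σ.trace.re) (one_mul ρ)

lemma sum_reTraceMul {ι n : Type*} [Fintype ι] [Fintype n] [DecidableEq n] {P : ι → Matrix n n ℂ}
    (hP : ∑ j, P j = 1) (ρ : Matrix n n ℂ) : ∑ j, reTraceMul (P j) ρ = ρ.trace.re := by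
  rw [← reTraceMul_one ρ, ← hP]
  simp [reTraceMul, sum_mul, trace_sum]

end DensityMatrices

section Channel

variable {ι n : Type*} [Fintype ι] [Fintype n]

/-- The map `ρ ↦ ∑ i, A i * ρ * (A i)ᴴ` with Kraus operators `A i`, acting on states. -/
def channel (A : ι → Matrix n n ℂ) (ρ : Matrix n n ℂ) : Matrix n n ℂ :=
  ∑ i, A i * ρ * (A i)ᴴ

lemma reTraceMul_channel_of_commute [DecidableEq n] {A : ι → Matrix n n ℂ}
    (hA : ∑ i, (A i)ᴴ * A i = 1) {Q : Matrix n n ℂ} (hQ : ∀ i, Commute Q (A i))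
    (ρ : Matrix n n ℂ) : reTraceMul Q (channel A ρ) = reTraceMul Q ρ := by
  have hterm (i : ι) : (Q * (A i * ρ * (A i)ᴴ)).trace = ((A i)ᴴ * A i * (Q * ρ)).trace := by
    rw [← mul_assoc, ← mul_assoc, (hQ i).eq, trace_mul_comm]
    simp only [mul_assoc]
  have htrace : (Q * channel A ρ).trace = (Q * ρ).trace := by
    rw [channel, mul_sum, trace_sum, sum_congr rfl fun i _ => hterm i, ← trace_sum, ← sum_mul,
      hA, one_mul]
  exact congrArg Complex.re htrace

end Channel

section Compression

variable {ι n : Type*} [Fintype n] {P : Matrix n n ℂ}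

lemma conjTranspose_eq_self_of_isStarProjection (hP : IsStarProjection P) : Pᴴ = P :=
  hP.isSelfAdjoint

lemma compression_compression (hP : IsStarProjection P) (η : Matrix n n ℂ) :
    P * (P * η * P) * P = P * η * P := by
  rw [← mul_assoc, ← mul_assoc, hP.isIdempotentElem.eq, mul_assoc, hP.isIdempotentElem.eq]

lemma trace_compression (hP : IsStarProjection P) (η : Matrix n n ℂ) :
    (P * η * P).trace = (P * η).trace := by
  rw [trace_mul_comm, ← mul_assoc, hP.isIdempotentElem.eq]

lemma conj_compression (hP : IsStarProjection P) {a : Matrix n n ℂ} (ha : Commute P a)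
    (η : Matrix n n ℂ) : a * (P * η * P) * aᴴ = P * (a * η * aᴴ) * P := by
  have hstar : P * aᴴ = aᴴ * P := by
    simpa [conjTranspose_mul, conjTranspose_eq_self_of_isStarProjection hP] using
      congrArg conjTranspose ha.eq.symm
  calc a * (P * η * P) * aᴴ = a * P * η * (P * aᴴ) := by simp only [mul_assoc]
    _ = P * (a * η * aᴴ) * P := by rw [← ha.eq, hstar]; simp only [mul_assoc]

lemma channel_compression [Fintype ι] (hP : IsStarProjection P) {A : ι → Matrix n n ℂ}
    (hcomm : ∀ i, Commute P (A i)) (η : Matrix n n ℂ) :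
    channel (fun i => A i * P) (P * η * P) = P * channel A η * P := by
  have hterm (i : ι) : A i * P * (P * η * P) * (A i * P)ᴴ = P * (A i * η * (A i)ᴴ) * P :=
    calc A i * P * (P * η * P) * (A i * P)ᴴ
        = A i * (P * (P * η * P) * P) * (A i)ᴴ := by
          rw [conjTranspose_mul, conjTranspose_eq_self_of_isStarProjection hP]
          simp only [mul_assoc]
      _ = P * (A i * η * (A i)ᴴ) * P := by
          rw [compression_compression hP, conj_compression hP (hcomm i)]
  simp only [channel, hterm, mul_sum, sum_mul]

/-- The compression `P η P` normalized to trace one: the state `η` conditioned on the range of the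
projection `P`. It is `0` if `Re Tr(P η) = 0`. -/
def conditionedState (P η : Matrix n n ℂ) : Matrix n n ℂ :=
  (reTraceMul P η)⁻¹ • (P * η * P)

lemma isDensity_conditionedState {k : ℕ} {P η : Matrix (Fin k) (Fin k) ℂ}
    (hP : IsStarProjection P) (hη : η.PosSemidef) (hPη : reTraceMul P η ≠ 0) :
    IsDensity (conditionedState P η) := by
  have hpos : (P * η * P).PosSemidef := by
    simpa [conjTranspose_eq_self_of_isStarProjection hP] using hη.mul_mul_conjTranspose_same P
  have htr : (P * η * P).trace = (reTraceMul P η : ℂ) := by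
    rw [trace_eq_ofReal_re hpos, trace_compression hP]
    rfl
  have hnonneg : 0 ≤ reTraceMul P η := by
    exact_mod_cast htr ▸ hpos.trace_nonneg
  refine ⟨hpos.smul (inv_nonneg.2 hnonneg), ?_⟩
  rw [conditionedState, trace_smul, htr, Complex.real_smul, Complex.ofReal_inv]
  exact inv_mul_cancel₀ (Complex.ofReal_ne_zero.2 hPη)

lemma compression_conditionedState (hP : IsStarProjection P) (η : Matrix n n ℂ) :
    P * conditionedState P η * P = conditionedState P η := by
  rw [conditionedState, mul_smul_comm, smul_mul_assoc, compression_compression hP]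

lemma channel_conditionedState [Fintype ι] (hP : IsStarProjection P) {A : ι → Matrix n n ℂ}
    (hcomm : ∀ i, Commute P (A i)) {η : Matrix n n ℂ} (hη : channel A η = η) :
    channel (fun i => A i * P) (conditionedState P η) = conditionedState P η := by
  have hlin (c : ℝ) : channel (fun i => A i * P) (c • (P * η * P))
      = c • channel (fun i => A i * P) (P * η * P) := by
    simp only [channel, mul_smul_comm, smul_mul_assoc, smul_sum]
  rw [conditionedState, hlin, channel_compression hP hcomm, hη]

lemma re_trace_conj_conditionedState (hP : IsStarProjection P) {a : Matrix n n ℂ}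
    (ha : Commute P a) (η : Matrix n n ℂ) :
    ((a * conditionedState P η * aᴴ).trace).re
      = (reTraceMul P η)⁻¹ * reTraceMul P (a * η * aᴴ) := by
  rw [conditionedState, mul_smul_comm, smul_mul_assoc, conj_compression hP ha, trace_smul,
    trace_compression hP, Complex.smul_re]
  rfl

end Compression

section EmpiricalState

open Topology

variable {k : ℕ} {ι : Type*} [Fintype ι]

lemma conj_cesaroMean (a b : Matrix (Fin k) (Fin k) ℂ) (r : ℕ → Matrix (Fin k) (Fin k) ℂ) (n : ℕ) :
    a * cesaroMean r n * b = cesaroMean (fun m => a * r m * b) n := by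
  simp only [cesaroMean, mul_smul_comm, smul_mul_assoc, mul_sum, sum_mul]

lemma tendsto_inv_smul_of_isDensity {r : ℕ → Matrix (Fin k) (Fin k) ℂ}
    (hr : ∀ n, IsDensity (r n)) : Tendsto (fun n : ℕ => (n : ℝ)⁻¹ • r n) atTop (𝓝 0) :=
  (isCompact_setOf_isDensity.isVonNBounded ℝ).smul_tendsto_zero (.of_forall hr)
    tendsto_inv_atTop_nhds_zero_nat

lemma tendsto_cesaroMean_shift_of_isDensity {r : ℕ → Matrix (Fin k) (Fin k) ℂ}
    (hr : ∀ n, IsDensity (r n)) {φ : ℕ → ℕ} (hφ : Tendsto φ atTop atTop)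
    {η : Matrix (Fin k) (Fin k) ℂ} (hη : Tendsto (fun n => cesaroMean r (φ n)) atTop (𝓝 η)) :
    Tendsto (fun n => cesaroMean (fun m => r (m + 1)) (φ n)) atTop (𝓝 η) := by
  have hzero : Tendsto (fun n : ℕ => (n : ℝ)⁻¹ • (r n - r 0)) atTop (𝓝 0) := by
    simpa only [smul_sub, sub_zero] using (tendsto_inv_smul_of_isDensity hr).sub
      (tendsto_inv_smul_of_isDensity fun _ => hr 0)
  simpa only [cesaroMean_shift, add_zero, Function.comp_def] using hη.add (hzero.comp hφ)

lemma exists_tendsto_cesaroMean_subseq {r : ℕ → Matrix (Fin k) (Fin k) ℂ}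
    (hr : ∀ n, IsDensity (r n)) : ∃ η, IsDensity η ∧ ∃ φ : ℕ → ℕ, Tendsto φ atTop atTop ∧
      Tendsto (fun n => cesaroMean r (φ n)) atTop (𝓝 η) := by
  have : FirstCountableTopology (Matrix (Fin k) (Fin k) ℂ) :=
    inferInstanceAs (FirstCountableTopology (Fin k → Fin k → ℂ))
  obtain ⟨η, hη, φ, hφ, hlim⟩ := isCompact_setOf_isDensity.tendsto_subseq
    (x := fun n => cesaroMean r (n + 1))
    fun n => cesaroMean_mem_of_convex convex_setOf_isDensity hr n.succ_ne_zero
  exact ⟨η, hη, fun n => φ n + 1, (tendsto_add_atTop_nat 1).comp hφ.tendsto_atTop, hlim⟩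

/-- A deterministic sequence of states `r` behaves on average like a trajectory with Kraus
operators `A`: the weights `χ i n`, standing for the indicator of the event that `A i` is applied at
time `n`, satisfy the law of large numbers `(1/n) ∑ₘ (χ i m • r (m+1) - A i * r m * (A i)ᴴ) → 0`. -/
structure IsTypicalPath (A : ι → Matrix (Fin k) (Fin k) ℂ) (χ : ι → ℕ → ℝ)
    (r : ℕ → Matrix (Fin k) (Fin k) ℂ) : Prop where
  density : ∀ n, IsDensity (r n)
  abs_weight_le_one : ∀ i n, |χ i n| ≤ 1
  sum_weight : ∀ n, ∑ i, χ i n = 1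
  law : ∀ i, Tendsto (cesaroMean fun n => χ i n • r (n + 1) - A i * r n * (A i)ᴴ) atTop (𝓝 0)

namespace IsTypicalPath

variable {A : ι → Matrix (Fin k) (Fin k) ℂ} {χ : ι → ℕ → ℝ} {r : ℕ → Matrix (Fin k) (Fin k) ℂ}
  {φ : ℕ → ℕ} {η : Matrix (Fin k) (Fin k) ℂ}

lemma tendsto_cesaroMean_smul (h : IsTypicalPath A χ r) (hφ : Tendsto φ atTop atTop)
    (hη : Tendsto (fun n => cesaroMean r (φ n)) atTop (𝓝 η)) (i : ι) :
    Tendsto (fun n => cesaroMean (fun m => χ i m • r (m + 1)) (φ n)) atTop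
      (𝓝 (A i * η * (A i)ᴴ)) := by
  have hconj : Tendsto (fun n => A i * cesaroMean r (φ n) * (A i)ᴴ) atTop
      (𝓝 (A i * η * (A i)ᴴ)) :=
    (hη.const_mul (A i)).mul_const _
  simpa only [Function.comp_def, cesaroMean_sub, ← conj_cesaroMean, sub_add_cancel, zero_add] using
    ((h.law i).comp hφ).add hconj

lemma channel_eq_of_tendsto (h : IsTypicalPath A χ r) (hφ : Tendsto φ atTop atTop)
    (hη : Tendsto (fun n => cesaroMean r (φ n)) atTop (𝓝 η)) : channel A η = η := by
  have hchannel : Tendsto (fun n => cesaroMean (fun m => r (m + 1)) (φ n)) atTop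
      (𝓝 (channel A η)) := by
    simpa only [channel, sum_cesaroMean, ← sum_smul, h.sum_weight, one_smul] using
      tendsto_finsetSum univ fun i _ => h.tendsto_cesaroMean_smul hφ hη i
  exact tendsto_nhds_unique hchannel (tendsto_cesaroMean_shift_of_isDensity h.density hφ hη)

lemma map_conj_eq_zero (h : IsTypicalPath A χ r) (hφ : Tendsto φ atTop atTop)
    (hη : Tendsto (fun n => cesaroMean r (φ n)) atTop (𝓝 η))
    {g : Matrix (Fin k) (Fin k) ℂ →ₗ[ℝ] ℝ} (hg : Tendsto (fun n => g (r n)) atTop (𝓝 0)) (i : ι) :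
    g (A i * η * (A i)ᴴ) = 0 := by
  have hweighted : Tendsto (fun n => χ i n * g (r (n + 1))) atTop (𝓝 0) :=
    bdd_le_mul_tendsto_zero' 1 (.of_forall (h.abs_weight_le_one i))
      (hg.comp (tendsto_add_atTop_nat 1))
  refine tendsto_nhds_unique ((g.continuous_of_finiteDimensional.tendsto _).comp
    (h.tendsto_cesaroMean_smul hφ hη i)) ?_
  simpa only [Function.comp_def, map_cesaroMean, map_smul, smul_eq_mul] using
    (tendsto_cesaroMean hweighted).comp hφ

lemma map_conj_eq_mul_trace (h : IsTypicalPath A χ r) (hφ : Tendsto φ atTop atTop)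
    (hη : Tendsto (fun n => cesaroMean r (φ n)) atTop (𝓝 η))
    {g : Matrix (Fin k) (Fin k) ℂ →ₗ[ℝ] ℝ} {c : ℝ} (hg : Tendsto (fun n => g (r n)) atTop (𝓝 c))
    (i : ι) : g (A i * η * (A i)ᴴ) = c * ((A i * η * (A i)ᴴ).trace).re := by
  let centered : Matrix (Fin k) (Fin k) ℂ →ₗ[ℝ] ℝ := g - c • reTraceMul 1
  have hcentered (σ) : centered σ = g σ - c * σ.trace.re := by
    simp [centered, reTraceMul_one]
  have hlim : Tendsto (fun n => centered (r n)) atTop (𝓝 0) := by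
    simpa [hcentered, (h.density _).2] using hg.sub_const c
  rw [← sub_eq_zero, ← hcentered]
  exact h.map_conj_eq_zero hφ hη hlim i

theorem exists_invariant_state (h : IsTypicalPath A χ r) :
    ∃ η, IsDensity η ∧ channel A η = η ∧
      ∀ (g : Matrix (Fin k) (Fin k) ℂ →ₗ[ℝ] ℝ) (c : ℝ), Tendsto (fun n => g (r n)) atTop (𝓝 c) →
        g η = c ∧ ∀ i, g (A i * η * (A i)ᴴ) = c * ((A i * η * (A i)ᴴ).trace).re := by
  obtain ⟨η, hdens, φ, hφ, hη⟩ := exists_tendsto_cesaroMean_subseq h.density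
  exact ⟨η, hdens, h.channel_eq_of_tendsto hφ hη, fun g c hg =>
    ⟨map_eq_of_tendsto_cesaroMean g.continuous_of_finiteDimensional hφ hη hg,
      h.map_conj_eq_mul_trace hφ hη hg⟩⟩

theorem exists_limit_eq_one (h : IsTypicalPath A χ r) {κ : Type*} [Fintype κ]
    {P σ : κ → Matrix (Fin k) (Fin k) ℂ} (hP : ∀ j, IsStarProjection (P j))
    (hsum : ∑ j, P j = 1) (hcomm : ∀ j i, Commute (P j) (A i))
    (huniq : ∀ j τ, IsDensity τ → P j * τ * P j = τ → channel (fun i => A i * P j) τ = τ →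
      τ = σ j)
    (hinj : Function.Injective fun j i => ((A i * σ j * (A i)ᴴ).trace).re) {c : κ → ℝ}
    (hc : ∀ j, Tendsto (fun n => reTraceMul (P j) (r n)) atTop (𝓝 (c j))) :
    ∃ j, c j = 1 ∧ ∀ j', j' ≠ j → c j' = 0 := by
  obtain ⟨η, hη, hinv, hlim⟩ := h.exists_invariant_state
  have hcη (j : κ) : reTraceMul (P j) η = c j := (hlim _ _ (hc j)).1
  have hstepLaw (j : κ) (hj : c j ≠ 0) :
      (fun i => ((A i * σ j * (A i)ᴴ).trace).re) = fun i => ((A i * η * (A i)ᴴ).trace).re := by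
    have hσ : conditionedState (P j) η = σ j :=
      huniq j _ (isDensity_conditionedState (hP j) hη.1 (hcη j ▸ hj))
        (compression_conditionedState (hP j) η) (channel_conditionedState (hP j) (hcomm j) hinv)
    funext i
    rw [← hσ, re_trace_conj_conditionedState (hP j) (hcomm j i), (hlim _ _ (hc j)).2 i, hcη,
      inv_mul_cancel_left₀ hj]
  have hcsum : ∑ j, c j = 1 := by
    simp only [← hcη, sum_reTraceMul hsum, hη.2, Complex.one_re]
  obtain ⟨j, -, hj⟩ := exists_ne_zero_of_sum_ne_zero (hcsum.trans_ne one_ne_zero)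
  have hother (j' : κ) (hne : j' ≠ j) : c j' = 0 := by
    by_contra hj'
    exact hne (hinj ((hstepLaw j' hj').trans (hstepLaw j hj).symm))
  exact ⟨j, by rwa [Fintype.sum_eq_single j hother] at hcsum, hother⟩

end IsTypicalPath

end EmpiricalState

section Trajectory

open Topology

variable {k d : ℕ}

lemma dir_injective : Function.Injective (dir d) := by
  intro i i' h
  have hcoord (j : Fin d) := congrFun h j
  simp only [dir] at hcoord
  have hi := hcoord ⟨if (i : ℕ) < d then i else i - d, by grind⟩
  grind

/-- The indicator of the event that the `n`-th step of the walk `X` goes in direction `e_i`. -/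
def stepIndicator {Ω : Type*} (X : ℕ → Ω → Fin d → ℤ) (i : Fin (2 * d)) (n : ℕ) (ω : Ω) : ℝ :=
  if X (n + 1) ω = X n ω + dir d i then 1 else 0

lemma abs_stepIndicator_le_one {Ω : Type*} (X : ℕ → Ω → Fin d → ℤ) (i : Fin (2 * d)) (n : ℕ)
    (ω : Ω) : |stepIndicator X i n ω| ≤ 1 := by
  rw [stepIndicator]
  split_ifs <;> simp

lemma sum_stepIndicator_le_one {Ω : Type*} (X : ℕ → Ω → Fin d → ℤ) (n : ℕ) (ω : Ω) :
    ∑ i, stepIndicator X i n ω ≤ 1 := by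
  simp only [stepIndicator, sum_boole]
  have hcard : #{i | X (n + 1) ω = X n ω + dir d i} ≤ 1 := card_le_one.2 fun i hi i' hi' =>
    dir_injective (add_left_cancel ((mem_filter.1 hi).2.symm.trans (mem_filter.1 hi').2))
  exact_mod_cast hcard

instance : BorelSpace (Matrix (Fin k) (Fin k) ℂ) :=
  inferInstanceAs (BorelSpace (Fin k → Fin k → ℂ))

namespace IsQTraj

variable {Ω : Type} {mΩ : MeasurableSpace Ω} {A : Fin (2 * d) → Matrix (Fin k) (Fin k) ℂ}
  {μ : Measure Ω} {ℱ : Filtration ℕ mΩ} {ρ : ℕ → Ω → Matrix (Fin k) (Fin k) ℂ}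
  {X : ℕ → Ω → Fin d → ℤ}

lemma stronglyMeasurable_map (h : IsQTraj A μ ℱ ρ X) {g : Matrix (Fin k) (Fin k) ℂ → ℝ}
    (hg : Measurable g) (n : ℕ) : StronglyMeasurable[ℱ n] fun ω => g (ρ n ω) :=
  (hg.comp (h.adapted_ρ n)).stronglyMeasurable

lemma stronglyMeasurable_stepIndicator (h : IsQTraj A μ ℱ ρ X) (i : Fin (2 * d)) (n : ℕ) :
    StronglyMeasurable[ℱ (n + 1)] (stepIndicator X i n) := by
  have hset : MeasurableSet[ℱ (n + 1)] {ω | X (n + 1) ω = X n ω + dir d i} :=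
    measurableSet_eq_fun (h.adapted_X (n + 1))
      (((h.adapted_X n).mono (ℱ.mono n.le_succ) le_rfl).add_const _)
  exact (Measurable.ite hset measurable_const measurable_const).stronglyMeasurable

lemma stronglyMeasurable_stepIndicator_mul (h : IsQTraj A μ ℱ ρ X)
    (g : Matrix (Fin k) (Fin k) ℂ →ₗ[ℝ] ℝ) (i : Fin (2 * d)) (n : ℕ) :
    StronglyMeasurable[ℱ (n + 1)] fun ω => stepIndicator X i n ω * g (ρ (n + 1) ω) :=
  (h.stronglyMeasurable_stepIndicator i n).mul
    (h.stronglyMeasurable_map g.continuous_of_finiteDimensional.measurable (n + 1))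

lemma exists_ae_abs_map_le (h : IsQTraj A μ ℱ ρ X) (g : Matrix (Fin k) (Fin k) ℂ →ₗ[ℝ] ℝ) :
    ∃ C, ∀ n, ∀ᵐ ω ∂μ, |g (ρ n ω)| ≤ C :=
  (exists_abs_le_of_isDensity g).imp fun _ hC n => (h.density n).mono fun _ => hC _

lemma exists_ae_abs_stepIndicator_mul_le (h : IsQTraj A μ ℱ ρ X)
    (g : Matrix (Fin k) (Fin k) ℂ →ₗ[ℝ] ℝ) (i : Fin (2 * d)) :
    ∃ C, ∀ n, ∀ᵐ ω ∂μ, |stepIndicator X i n ω * g (ρ (n + 1) ω)| ≤ C := by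
  obtain ⟨C, hC⟩ := h.exists_ae_abs_map_le g
  refine ⟨C, fun n => (hC (n + 1)).mono fun ω hω => ?_⟩
  rw [abs_mul]
  exact (mul_le_of_le_one_left (abs_nonneg _) (abs_stepIndicator_le_one X i n ω)).trans hω

lemma stepIndicator_mul_ae_eq (h : IsQTraj A μ ℱ ρ X) (g : Matrix (Fin k) (Fin k) ℂ →ₗ[ℝ] ℝ)
    (i : Fin (2 * d)) (n : ℕ) :
    (fun ω => stepIndicator X i n ω * g (ρ (n + 1) ω)) =ᵐ[μ]
      (fun ω => (((A i * ρ n ω * (A i)ᴴ).trace).re)⁻¹ * g (A i * ρ n ω * (A i)ᴴ))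
        * stepIndicator X i n := by
  filter_upwards [h.density n, h.update n i] with ω hω hupdate
  rw [Pi.mul_apply, mul_comm]
  by_cases hstep : X (n + 1) ω = X n ω + dir d i
  · rw [hupdate hstep, trace_eq_ofReal_re (hω.1.mul_mul_conjTranspose_same (A i)),
      ← Complex.ofReal_inv, Complex.coe_smul, map_smul, smul_eq_mul, Complex.ofReal_re]
  · simp only [stepIndicator, if_neg hstep, mul_zero]

lemma condExp_stepIndicator (h : IsQTraj A μ ℱ ρ X) (i : Fin (2 * d)) (n : ℕ) :
    μ[stepIndicator X i n | ℱ n] =ᵐ[μ] fun ω => ((A i * ρ n ω * (A i)ᴴ).trace).re :=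
  h.prob n i

variable [IsFiniteMeasure μ]

lemma integrable_map (h : IsQTraj A μ ℱ ρ X) (g : Matrix (Fin k) (Fin k) ℂ →ₗ[ℝ] ℝ) (n : ℕ) :
    Integrable (fun ω => g (ρ n ω)) μ := by
  obtain ⟨C, hC⟩ := h.exists_ae_abs_map_le g
  exact .of_bound ((h.stronglyMeasurable_map g.continuous_of_finiteDimensional.measurable n).mono
    (ℱ.le n)).aestronglyMeasurable C (hC n)

lemma integrable_stepIndicator (h : IsQTraj A μ ℱ ρ X) (i : Fin (2 * d)) (n : ℕ) :
    Integrable (stepIndicator X i n) μ :=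
  .of_bound ((h.stronglyMeasurable_stepIndicator i n).mono (ℱ.le _)).aestronglyMeasurable 1
    (.of_forall (abs_stepIndicator_le_one X i n))

lemma integrable_stepIndicator_mul (h : IsQTraj A μ ℱ ρ X)
    (g : Matrix (Fin k) (Fin k) ℂ →ₗ[ℝ] ℝ) (i : Fin (2 * d)) (n : ℕ) :
    Integrable (fun ω => stepIndicator X i n ω * g (ρ (n + 1) ω)) μ := by
  obtain ⟨C, hC⟩ := h.exists_ae_abs_stepIndicator_mul_le g i
  exact .of_bound ((h.stronglyMeasurable_stepIndicator_mul g i n).mono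
    (ℱ.le _)).aestronglyMeasurable C (hC n)

theorem condExp_stepIndicator_mul (h : IsQTraj A μ ℱ ρ X)
    (g : Matrix (Fin k) (Fin k) ℂ →ₗ[ℝ] ℝ) (i : Fin (2 * d)) (n : ℕ) :
    μ[fun ω => stepIndicator X i n ω * g (ρ (n + 1) ω) | ℱ n] =ᵐ[μ]
      fun ω => g (A i * ρ n ω * (A i)ᴴ) := by
  have hmeas : Measurable fun σ : Matrix (Fin k) (Fin k) ℂ =>
      (((A i * σ * (A i)ᴴ).trace).re)⁻¹ * g (A i * σ * (A i)ᴴ) := by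
    have hg := g.continuous_of_finiteDimensional
    have htrace : Continuous fun σ => ((A i * σ * (A i)ᴴ).trace).re := by fun_prop
    have hgconj : Continuous fun σ => g (A i * σ * (A i)ᴴ) := by fun_prop
    exact htrace.measurable.inv.mul hgconj.measurable
  have hcongr := h.stepIndicator_mul_ae_eq g i n
  have hpull := condExp_mul_of_stronglyMeasurable_left (h.stronglyMeasurable_map hmeas n)
    ((h.integrable_stepIndicator_mul g i n).congr hcongr) (h.integrable_stepIndicator i n)
  refine (condExp_congr_ae hcongr).trans (hpull.trans ?_)
  filter_upwards [h.condExp_stepIndicator i n, h.density n] with ω hprob hω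
  have hpos := hω.1.mul_mul_conjTranspose_same (A i)
  rw [Pi.mul_apply, hprob]
  by_cases htr : ((A i * ρ n ω * (A i)ᴴ).trace).re = 0
  · have hzero : A i * ρ n ω * (A i)ᴴ = 0 :=
      hpos.trace_eq_zero_iff.1 (by rw [trace_eq_ofReal_re hpos, htr, Complex.ofReal_zero])
    simp [hzero]
  · field_simp

lemma condExp_sum_stepIndicator_mul (h : IsQTraj A μ ℱ ρ X)
    (g : Matrix (Fin k) (Fin k) ℂ →ₗ[ℝ] ℝ) (n : ℕ) :
    μ[fun ω => (∑ i, stepIndicator X i n ω) * g (ρ (n + 1) ω) | ℱ n] =ᵐ[μ]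
      fun ω => g (channel A (ρ n ω)) := by
  have hsum := condExp_finsetSum (s := univ) (fun i _ => h.integrable_stepIndicator_mul g i n)
    (ℱ n)
  have heq : (fun ω => (∑ i, stepIndicator X i n ω) * g (ρ (n + 1) ω))
      = ∑ i, fun ω => stepIndicator X i n ω * g (ρ (n + 1) ω) := by
    ext ω
    rw [Finset.sum_apply, sum_mul]
  rw [heq]
  filter_upwards [hsum, ae_all_iff.2 fun i => h.condExp_stepIndicator_mul g i n] with ω hω hterm
  rw [hω, Finset.sum_apply, channel, map_sum, sum_congr rfl fun i _ => hterm i]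

lemma ae_sum_stepIndicator_eq_one (h : IsQTraj A μ ℱ ρ X) (hA : ∑ i, (A i)ᴴ * A i = 1) (n : ℕ) :
    ∀ᵐ ω ∂μ, ∑ i, stepIndicator X i n ω = 1 := by
  have hint : Integrable (fun ω => ∑ i, stepIndicator X i n ω) μ :=
    integrable_finsetSum _ fun i _ => h.integrable_stepIndicator i n
  have htrace (m : ℕ) : ∀ᵐ ω ∂μ, reTraceMul 1 (ρ m ω) = 1 := by
    filter_upwards [h.density m] with ω hω
    rw [reTraceMul_one, hω.2, Complex.one_re]
  have hcongr : (fun ω => (∑ i, stepIndicator X i n ω) * reTraceMul 1 (ρ (n + 1) ω)) =ᵐ[μ]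
      fun ω => ∑ i, stepIndicator X i n ω := by
    filter_upwards [htrace (n + 1)] with ω hω
    rw [hω, mul_one]
  have hcondExp : μ[fun ω => ∑ i, stepIndicator X i n ω | ℱ n] =ᵐ[μ] fun _ => 1 := by
    filter_upwards [condExp_congr_ae (m := ℱ n) hcongr,
      h.condExp_sum_stepIndicator_mul (reTraceMul 1) n, htrace n] with ω hω hchannel hone
    rw [← hω, hchannel, reTraceMul_channel_of_commute hA fun i => Commute.one_left _, hone]
  rw [← EventuallyEq, ← integral_eq_iff_of_ae_le hint (integrable_const 1)
    (.of_forall (sum_stepIndicator_le_one X n)), ← integral_condExp (ℱ.le n),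
    integral_congr_ae hcondExp]

lemma condExp_map_succ (h : IsQTraj A μ ℱ ρ X) (hA : ∑ i, (A i)ᴴ * A i = 1)
    (g : Matrix (Fin k) (Fin k) ℂ →ₗ[ℝ] ℝ) (n : ℕ) :
    μ[fun ω => g (ρ (n + 1) ω) | ℱ n] =ᵐ[μ] fun ω => g (channel A (ρ n ω)) := by
  refine (condExp_congr_ae ?_).trans (h.condExp_sum_stepIndicator_mul g n)
  filter_upwards [h.ae_sum_stepIndicator_eq_one hA n] with ω hω
  rw [hω, one_mul]

theorem integral_reTraceMul_eq (h : IsQTraj A μ ℱ ρ X) (hA : ∑ i, (A i)ᴴ * A i = 1)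
    {Q : Matrix (Fin k) (Fin k) ℂ} (hQ : ∀ i, Commute Q (A i)) (n : ℕ) :
    ∫ ω, reTraceMul Q (ρ n ω) ∂μ = ∫ ω, reTraceMul Q (ρ 0 ω) ∂μ := by
  induction n with
  | zero => rfl
  | succ n ih =>
    rw [← ih, ← integral_condExp (ℱ.le n), integral_congr_ae (h.condExp_map_succ hA _ n)]
    simp only [reTraceMul_channel_of_commute hA hQ]

lemma aestronglyMeasurable_limit (h : IsQTraj A μ ℱ ρ X) (g : Matrix (Fin k) (Fin k) ℂ →ₗ[ℝ] ℝ)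
    {q : Ω → ℝ} (hq : ∀ᵐ ω ∂μ, Tendsto (fun n => g (ρ n ω)) atTop (𝓝 (q ω))) :
    AEStronglyMeasurable q μ :=
  aestronglyMeasurable_of_tendsto_ae atTop
    (fun n => (h.integrable_map g n).aestronglyMeasurable) hq

theorem integral_limit_reTraceMul_eq (h : IsQTraj A μ ℱ ρ X) (hA : ∑ i, (A i)ᴴ * A i = 1)
    {Q : Matrix (Fin k) (Fin k) ℂ} (hQ : ∀ i, Commute Q (A i)) {q : Ω → ℝ}
    (hq : ∀ᵐ ω ∂μ, Tendsto (fun n => reTraceMul Q (ρ n ω)) atTop (𝓝 (q ω))) :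
    ∫ ω, q ω ∂μ = ∫ ω, reTraceMul Q (ρ 0 ω) ∂μ := by
  obtain ⟨C, hC⟩ := h.exists_ae_abs_map_le (reTraceMul Q)
  have hlim := tendsto_integral_of_dominated_convergence (fun _ => C)
    (fun n => (h.integrable_map (reTraceMul Q) n).aestronglyMeasurable) (integrable_const C) hC hq
  simp only [h.integral_reTraceMul_eq hA hQ] at hlim
  exact tendsto_nhds_unique hlim tendsto_const_nhds

theorem ae_tendsto_cesaroMean_stepIndicator_smul (h : IsQTraj A μ ℱ ρ X) (i : Fin (2 * d)) :
    ∀ᵐ ω ∂μ, Tendsto (cesaroMean fun n =>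
      stepIndicator X i n ω • ρ (n + 1) ω - A i * ρ n ω * (A i)ᴴ) atTop (𝓝 0) := by
  let b := Module.finBasis ℝ (Matrix (Fin k) (Fin k) ℂ)
  have hcoord (l) : ∀ᵐ ω ∂μ, Tendsto (fun m => b.coord l (cesaroMean (fun n =>
      stepIndicator X i n ω • ρ (n + 1) ω - A i * ρ n ω * (A i)ᴴ) m)) atTop (𝓝 0) := by
    obtain ⟨C, hC⟩ := h.exists_ae_abs_stepIndicator_mul_le (b.coord l) i
    filter_upwards [ae_tendsto_cesaroMean_sub_condExp
      (h.stronglyMeasurable_stepIndicator_mul (b.coord l) i) hC,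
      ae_all_iff.2 (h.condExp_stepIndicator_mul (b.coord l) i)] with ω hω hcondExp
    simpa only [map_cesaroMean, map_sub, map_smul, smul_eq_mul, hcondExp] using hω
  filter_upwards [ae_all_iff.2 hcoord] with ω hω
  have hsum := tendsto_finsetSum univ fun l _ => (hω l).smul_const (b l)
  simpa only [Module.Basis.coord_apply, Module.Basis.sum_repr, zero_smul, sum_const_zero] using hsum

theorem ae_isTypicalPath (h : IsQTraj A μ ℱ ρ X) (hA : ∑ i, (A i)ᴴ * A i = 1) :
    ∀ᵐ ω ∂μ, IsTypicalPath A (fun i n => stepIndicator X i n ω) fun n => ρ n ω := by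
  filter_upwards [ae_all_iff.2 h.density, ae_all_iff.2 (h.ae_sum_stepIndicator_eq_one hA),
    ae_all_iff.2 h.ae_tendsto_cesaroMean_stepIndicator_smul] with ω hdensity hsum hlaw
  exact ⟨hdensity, fun i n => abs_stepIndicator_le_one X i n ω, hsum, hlaw⟩

end IsQTraj

end Trajectory

section ZeroOneValued

variable {Ω : Type*} {mΩ : MeasurableSpace Ω} {μ : Measure Ω} {f : Ω → ℝ}

lemma measureReal_eq_one_eq_integral (hf : AEStronglyMeasurable f μ)
    (h01 : ∀ᵐ ω ∂μ, f ω = 0 ∨ f ω = 1) : μ.real {ω | f ω = 1} = ∫ ω, f ω ∂μ := by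
  have hset : NullMeasurableSet {ω | f ω = 1} μ :=
    nullMeasurableSet_eq_fun hf.aemeasurable aemeasurable_const
  rw [← setIntegral_one_eq_measureReal, ← integral_indicator₀ hset]
  refine integral_congr_ae ?_
  filter_upwards [h01] with ω hω
  rcases hω with hω | hω <;> simp [Set.indicator, hω]

lemma measureReal_eq_zero_eq_one_sub_integral [IsProbabilityMeasure μ]
    (hf : AEStronglyMeasurable f μ) (h01 : ∀ᵐ ω ∂μ, f ω = 0 ∨ f ω = 1) :
    μ.real {ω | f ω = 0} = 1 - ∫ ω, f ω ∂μ := by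
  have hint : Integrable f μ :=
    .of_bound hf 1 (h01.mono fun ω hω => by rcases hω with hω | hω <;> simp [hω])
  have hflip := measureReal_eq_one_eq_integral (f := fun ω => 1 - f ω)
    (aestronglyMeasurable_const.sub hf)
    (h01.mono fun ω hω => by rcases hω with hω | hω <;> simp [hω])
  simpa [integral_sub (integrable_const 1) hint] using hflip

end ZeroOneValued

/-- Under (H1'), (H2) and (H3), almost surely the limit vector
`(p_∞^{(1)}, …, p_∞^{(N)})` of the martingales `p_n^{(j)} = Tr(P_j ρ_n)` has exactly one
coordinate equal to `1` and all others equal to `0`, and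
`ℙ_ρ[p_∞^{(j)} = 1] = p_0^{(j)} = 1 − ℙ_ρ[p_∞^{(j)} = 0]`. -/
theorem stmt17 {k d N : ℕ} (hd : 1 ≤ d)
    (A : Fin (2 * d) → Matrix (Fin k) (Fin k) ℂ)
    (hA : ∑ j, (A j)ᴴ * A j = 1)
    (P : Fin N → Matrix (Fin k) (Fin k) ℂ)
    (hsa : ∀ j, (P j)ᴴ = P j) (hidem : ∀ j, P j * P j = P j)
    (horth : ∀ j j', j ≠ j' → P j * P j' = 0)
    (hsum : ∑ j, P j = 1)
    (hcomm : ∀ (i : Fin (2 * d)) (j : Fin N), P j * A i = A i * P j)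
    -- (H2): each `L^{(j)}` admits a unique invariant state `ρ_∞^{(j)}` on `E_j`
    (ρinfj : Fin N → Matrix (Fin k) (Fin k) ℂ)
    (hρinfj : ∀ j, IsDensity (ρinfj j) ∧ P j * ρinfj j * P j = ρinfj j)
    (hinvj : ∀ j, (∑ i, (A i * P j) * ρinfj j * (A i * P j)ᴴ) = ρinfj j)
    (huniqj : ∀ j σ, IsDensity σ → P j * σ * P j = σ →
      (∑ i, (A i * P j) * σ * (A i * P j)ᴴ) = σ → σ = ρinfj j)
    -- (H3): the vectors `m^{(j)}` are pairwise distinct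
    (hm : ∀ j j', j ≠ j' →
      (fun i : Fin (2 * d) => ((A i * ρinfj j * (A i)ᴴ).trace).re) ≠
        (fun i : Fin (2 * d) => ((A i * ρinfj j' * (A i)ᴴ).trace).re))
    {Ω : Type} {mΩ : MeasurableSpace Ω} (μ : Measure Ω) [IsProbabilityMeasure μ]
    (ℱ : Filtration ℕ mΩ)
    (ρ : ℕ → Ω → Matrix (Fin k) (Fin k) ℂ) (X : ℕ → Ω → Fin d → ℤ)
    (hQT : IsQTraj A μ ℱ ρ X)
    (ρ₀ : Matrix (Fin k) (Fin k) ℂ) (hρ₀ : IsDensity ρ₀)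
    (hinit : ∀ ω, ρ 0 ω = ρ₀)
    (pinf : Fin N → Ω → ℝ)
    (has : ∀ j, ∀ᵐ ω ∂μ,
      Tendsto (fun n => ((P j * ρ n ω).trace).re) atTop (nhds (pinf j ω))) :
    (∀ᵐ ω ∂μ, ∃ j, pinf j ω = 1 ∧ ∀ j', j' ≠ j → pinf j' ω = 0) ∧
    (∀ j, (μ {ω | pinf j ω = 1}).toReal = ((P j * ρ₀).trace).re ∧
      (μ {ω | pinf j ω = 0}).toReal = 1 - ((P j * ρ₀).trace).re) := by
  have hP (j : Fin N) : IsStarProjection (P j) := ⟨hidem j, hsa j⟩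
  have hdichotomy : ∀ᵐ ω ∂μ, ∃ j, pinf j ω = 1 ∧ ∀ j', j' ≠ j → pinf j' ω = 0 := by
    filter_upwards [hQT.ae_isTypicalPath hA, ae_all_iff.2 has] with ω hpath hlim
    exact hpath.exists_limit_eq_one hP hsum (fun j i => hcomm i j) huniqj
      (fun j j' h => by_contra fun hne => hm j j' hne h) hlim
  refine ⟨hdichotomy, fun j => ?_⟩
  have h01 : ∀ᵐ ω ∂μ, pinf j ω = 0 ∨ pinf j ω = 1 := by
    filter_upwards [hdichotomy] with ω ⟨j', hone, hzero⟩
    rcases eq_or_ne j j' with rfl | hne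
    exacts [.inr hone, .inl (hzero j hne)]
  have hmean : ∫ ω, pinf j ω ∂μ = ((P j * ρ₀).trace).re :=
    calc ∫ ω, pinf j ω ∂μ = ∫ ω, reTraceMul (P j) (ρ 0 ω) ∂μ :=
          hQT.integral_limit_reTraceMul_eq hA (fun i => hcomm i j) (has j)
      _ = reTraceMul (P j) ρ₀ := by simp [hinit]
  have hmeas : AEStronglyMeasurable (pinf j) μ :=
    hQT.aestronglyMeasurable_limit (reTraceMul (P j)) (has j)
  rw [← hmean]
  exact ⟨measureReal_eq_one_eq_integral hmeas h01,
    measureReal_eq_zero_eq_one_sub_integral hmeas h01⟩
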